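/- (Polynomial decay, first-order case) There exists a constant C > 0, depending only on L, η, β, κ, τ, m, δ and p, such that for every smooth solution (u, θ, q) of the thermoviscoelastic system with second sound satisfying boundary conditions (D) and every t > 0, E₁(t) ≤ C (E₁(0) + E₂(0)) / t. -/

import Mathlib

open MeasureTheory Set intervalIntegral

noncomputable section

/-- Time derivative of a function of `(x, t)` (curried as `x ↦ t ↦ f x t`). -/
def pdt (f : ℝ → ℝ → ℝ) : ℝ → ℝ → ℝ := fun x t => deriv (f x) t

/-- Space derivative of a function of `(x, t)`. -/
def pdx (f : ℝ → ℝ → ℝ) : ℝ → ℝ → ℝ := fun x t => deriv (fun y => f y t) x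

/-- A smooth solution of the thermoviscoelastic system with second sound:
`u, θ, q` are `C^∞` and the three PDEs hold on `(0, L) × (0, ∞)`. -/
def IsSmoothSol (L η β κ τ : ℝ) (m δ p : ℝ → ℝ) (u θ q : ℝ → ℝ → ℝ) : Prop :=
  ContDiff ℝ (⊤ : ℕ∞) (Function.uncurry u) ∧ ContDiff ℝ (⊤ : ℕ∞) (Function.uncurry θ) ∧
    ContDiff ℝ (⊤ : ℕ∞) (Function.uncurry q) ∧
    ∀ x ∈ Ioo (0 : ℝ) L, ∀ t : ℝ, 0 < t →
      (m x * pdt (pdt u) x t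
          - pdx (fun y s => p y * pdx u y s + 2 * δ y * pdt (pdx u) y s) x t
          + η * pdx θ x t = 0) ∧
      (pdt θ x t + κ * pdx q x t + η * pdt (pdx u) x t = 0) ∧
      (τ * pdt q x t + β * q x t + κ * pdx θ x t = 0)

/-- Boundary conditions (D): clamped structure, temperature zero at both ends. -/
def BCD (L : ℝ) (u θ : ℝ → ℝ → ℝ) : Prop :=
  ∀ t : ℝ, 0 ≤ t → u 0 t = 0 ∧ u L t = 0 ∧ θ 0 t = 0 ∧ θ L t = 0

/-- The first-order energy `E₁`. -/
def energy1 (L τ : ℝ) (m p : ℝ → ℝ) (u θ q : ℝ → ℝ → ℝ) (t : ℝ) : ℝ :=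
  (1 / 2) * ((∫ x in (0 : ℝ)..L, p x * (pdx u x t) ^ 2)
    + (∫ x in (0 : ℝ)..L, m x * (pdt u x t) ^ 2)
    + (∫ x in (0 : ℝ)..L, (θ x t) ^ 2)
    + τ * ∫ x in (0 : ℝ)..L, (q x t) ^ 2)

/-- The second-order energy `E₂`. -/
def energy2 (L τ : ℝ) (m p : ℝ → ℝ) (u θ q : ℝ → ℝ → ℝ) (t : ℝ) : ℝ :=
  (1 / 2) * ((∫ x in (0 : ℝ)..L, p x * (pdt (pdx u) x t) ^ 2)
    + (∫ x in (0 : ℝ)..L, m x * (pdt (pdt u) x t) ^ 2)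
    + (∫ x in (0 : ℝ)..L, (pdt θ x t) ^ 2)
    + τ * ∫ x in (0 : ℝ)..L, (pdt q x t) ^ 2)


open Filter Topology
open scoped ContDiff

/-- Smoothness of a curried function of two variables. -/
def SmoothTwo (f : ℝ → ℝ → ℝ) : Prop := ContDiff ℝ (⊤ : ℕ∞) (Function.uncurry f)

lemma SmoothTwo.diffAt {f : ℝ → ℝ → ℝ} (hf : SmoothTwo f) (z : ℝ × ℝ) :
    DifferentiableAt ℝ (Function.uncurry f) z :=
  (hf.differentiable (by simp)) z

lemma SmoothTwo.hasDerivAt_t' {f : ℝ → ℝ → ℝ} (hf : SmoothTwo f) (x t : ℝ) :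
    HasDerivAt (f x) (fderiv ℝ (Function.uncurry f) (x, t) (0, 1)) t := by
  have h1 : HasDerivAt (fun s : ℝ => (x, s)) ((0 : ℝ), (1 : ℝ)) t :=
    (hasDerivAt_const t x).prodMk (hasDerivAt_id t)
  exact (hf.diffAt (x, t)).hasFDerivAt.comp_hasDerivAt t h1

lemma SmoothTwo.hasDerivAt_x' {f : ℝ → ℝ → ℝ} (hf : SmoothTwo f) (x t : ℝ) :
    HasDerivAt (fun y => f y t) (fderiv ℝ (Function.uncurry f) (x, t) (1, 0)) x := by
  have h1 : HasDerivAt (fun s : ℝ => (s, t)) ((1 : ℝ), (0 : ℝ)) x :=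
    (hasDerivAt_id x).prodMk (hasDerivAt_const x t)
  exact (hf.diffAt (x, t)).hasFDerivAt.comp_hasDerivAt x h1

lemma SmoothTwo.pdt_eq {f : ℝ → ℝ → ℝ} (hf : SmoothTwo f) (x t : ℝ) :
    pdt f x t = fderiv ℝ (Function.uncurry f) (x, t) (0, 1) := (hf.hasDerivAt_t' x t).deriv

lemma SmoothTwo.pdx_eq {f : ℝ → ℝ → ℝ} (hf : SmoothTwo f) (x t : ℝ) :
    pdx f x t = fderiv ℝ (Function.uncurry f) (x, t) (1, 0) := (hf.hasDerivAt_x' x t).deriv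

lemma SmoothTwo.hasDerivAt_t {f : ℝ → ℝ → ℝ} (hf : SmoothTwo f) (x t : ℝ) :
    HasDerivAt (f x) (pdt f x t) t := by rw [hf.pdt_eq]; exact hf.hasDerivAt_t' x t

lemma SmoothTwo.hasDerivAt_x {f : ℝ → ℝ → ℝ} (hf : SmoothTwo f) (x t : ℝ) :
    HasDerivAt (fun y => f y t) (pdx f x t) x := by rw [hf.pdx_eq]; exact hf.hasDerivAt_x' x t

lemma SmoothTwo.pdt {f : ℝ → ℝ → ℝ} (hf : SmoothTwo f) : SmoothTwo (pdt f) := by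
  have : Function.uncurry (_root_.pdt f)
      = fun z => fderiv ℝ (Function.uncurry f) z (0, 1) := by
    ext ⟨x, t⟩; exact hf.pdt_eq x t
  unfold SmoothTwo
  rw [this]
  exact (hf.fderiv_right (m := (⊤ : ℕ∞)) (by simp)).clm_apply contDiff_const

lemma SmoothTwo.pdx {f : ℝ → ℝ → ℝ} (hf : SmoothTwo f) : SmoothTwo (pdx f) := by
  have : Function.uncurry (_root_.pdx f)
      = fun z => fderiv ℝ (Function.uncurry f) z (1, 0) := by
    ext ⟨x, t⟩; exact hf.pdx_eq x t
  unfold SmoothTwo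
  rw [this]
  exact (hf.fderiv_right (m := (⊤ : ℕ∞)) (by simp)).clm_apply contDiff_const

lemma SmoothTwo.comm {f : ℝ → ℝ → ℝ} (hf : SmoothTwo f) : _root_.pdx (_root_.pdt f) = _root_.pdt (_root_.pdx f) := by
  ext x t
  have e1 : Function.uncurry (_root_.pdt f)
      = fun z => fderiv ℝ (Function.uncurry f) z (0, 1) := by
    ext ⟨x, t⟩; exact hf.pdt_eq x t
  have e2 : Function.uncurry (_root_.pdx f)
      = fun z => fderiv ℝ (Function.uncurry f) z (1, 0) := by
    ext ⟨x, t⟩; exact hf.pdx_eq x t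
  have hd : DifferentiableAt ℝ (fderiv ℝ (Function.uncurry f)) (x, t) :=
    ((hf.fderiv_right (m := (⊤ : ℕ∞)) (by simp)).differentiable (by simp)) _
  rw [hf.pdt.pdx_eq, hf.pdx.pdt_eq, e1, e2]
  rw [fderiv_clm_apply hd (differentiableAt_const _), fderiv_clm_apply hd (differentiableAt_const _)]
  have := (hf.contDiffAt (x := (x, t))).isSymmSndFDerivAt (by
    rw [minSmoothness_of_isRCLikeNormedField]; exact WithTop.coe_le_coe.2 le_top)
  simpa using this (1, 0) (0, 1)

lemma SmoothTwo.cont {f : ℝ → ℝ → ℝ} (hf : SmoothTwo f) : Continuous (fun z : ℝ × ℝ => f z.1 z.2) :=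
  hf.continuous

lemma SmoothTwo.cont_x {f : ℝ → ℝ → ℝ} (hf : SmoothTwo f) (t : ℝ) : Continuous (fun x => f x t) :=
  hf.cont.comp (by fun_prop : Continuous (fun x : ℝ => (x, t)))

lemma SmoothTwo.smooth_x {f : ℝ → ℝ → ℝ} (hf : SmoothTwo f) (t : ℝ) :
    ContDiff ℝ 1 (fun x => f x t) := by
  have h : ContDiff ℝ 1 (Function.uncurry f) := hf.of_le (by exact_mod_cast le_top)
  exact h.comp (by fun_prop : ContDiff ℝ 1 (fun x : ℝ => (x, t)))

/-- Differentiation under the integral sign. -/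
lemma hasDerivAt_int {L : ℝ} (hL : 0 < L) {G G' : ℝ → ℝ → ℝ}
    (hG : ∀ t, ContinuousOn (fun x => G x t) (Icc 0 L))
    (hG' : ContinuousOn (fun z : ℝ × ℝ => G' z.1 z.2) (Icc 0 L ×ˢ univ))
    (hd : ∀ x ∈ Icc 0 L, ∀ t, HasDerivAt (G x) (G' x t) t) (t : ℝ) :
    HasDerivAt (fun s => ∫ x in (0 : ℝ)..L, G x s) (∫ x in (0 : ℝ)..L, G' x t) t := by
  have hsub : Icc 0 L ×ˢ Icc (t - 1) (t + 1) ⊆ Icc (0 : ℝ) L ×ˢ (univ : Set ℝ) :=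
    prod_mono subset_rfl (subset_univ _)
  obtain ⟨M, hM⟩ := ((isCompact_Icc (a := (0 : ℝ)) (b := L)).prod
    (isCompact_Icc (a := t - 1) (b := t + 1))).exists_bound_of_continuousOn (hG'.mono hsub)
  have hII : uIoc (0 : ℝ) L ⊆ Icc 0 L := by rw [uIoc_of_le hL.le]; exact Ioc_subset_Icc_self
  have hint : ∀ s, IntervalIntegrable (fun x => G x s) volume 0 L := fun s =>
    (hG s).intervalIntegrable_of_Icc hL.le
  have hint' : IntervalIntegrable (fun x => G' x t) volume 0 L := by
    refine ContinuousOn.intervalIntegrable_of_Icc hL.le ?_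
    exact hG'.comp (f := fun x : ℝ => (x, t)) (by fun_prop) (fun x hx => ⟨hx, mem_univ _⟩)
  refine (intervalIntegral.hasDerivAt_integral_of_dominated_loc_of_deriv_le
    (F := fun s x => G x s) (F' := fun s x => G' x s) (s := Icc (t - 1) (t + 1))
    (bound := fun _ => M) (Icc_mem_nhds (by linarith) (by linarith)) ?_ (hint t) ?_ ?_ ?_ ?_).2
  · exact Eventually.of_forall fun s => (intervalIntegrable_iff.1 (hint s)).aestronglyMeasurable
  · exact (intervalIntegrable_iff.1 hint').aestronglyMeasurable
  · exact ae_of_all _ fun x hx s hs => hM (x, s) ⟨hII hx, hs⟩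
  · exact intervalIntegrable_const
  · exact ae_of_all _ fun x hx s _ => hd x (hII hx) s

/-- A Poincare inequality. -/
lemma poincare {L : ℝ} (hL : 0 < L) {φ φ' : ℝ → ℝ} (hd : ∀ x, HasDerivAt φ (φ' x) x)
    (hc : Continuous φ') (h0 : φ 0 = 0) :
    ∫ x in (0 : ℝ)..L, φ x ^ 2 ≤ 4 * L ^ 2 * ∫ x in (0 : ℝ)..L, φ' x ^ 2 := by
  have hφ : Continuous φ := continuous_iff_continuousAt.2 fun x => (hd x).continuousAt
  have h1 : ∫ x in (0 : ℝ)..L, (φ x ^ 2 + (x - L) * (2 * φ x * φ' x)) = 0 := by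
    rw [integral_eq_sub_of_hasDerivAt (f := fun x => (x - L) * φ x ^ 2)]
    · simp [h0]
    · intro x _
      have := ((hasDerivAt_id x).sub_const L).mul ((hd x).pow 2)
      exact this.congr_deriv (by simp)
    · exact Continuous.intervalIntegrable (by fun_prop) _ _
  have h2 : ∫ x in (0 : ℝ)..L, ((1 / 2) * φ x ^ 2 - 2 * L ^ 2 * φ' x ^ 2)
      ≤ ∫ x in (0 : ℝ)..L, (φ x ^ 2 + (x - L) * (2 * φ x * φ' x)) := by
    apply integral_mono_on hL.le (Continuous.intervalIntegrable (by fun_prop) _ _)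
      (Continuous.intervalIntegrable (by fun_prop) _ _)
    intro x hx
    have h3 : (L - x) ^ 2 ≤ L ^ 2 := by
      have := hx.1; have := hx.2
      nlinarith
    nlinarith [sq_nonneg (φ x - 2 * (L - x) * φ' x), mul_le_mul_of_nonneg_right h3 (sq_nonneg (φ' x))]
  rw [integral_sub (Continuous.intervalIntegrable (by fun_prop) _ _)
      (Continuous.intervalIntegrable (by fun_prop) _ _), intervalIntegral.integral_const_mul,
      intervalIntegral.integral_const_mul] at h2
  linarith

/-- The weak formulation used in the proof. -/
structure WeakSol (L η β κ τ : ℝ) (m δ p : ℝ → ℝ) (u θ q : ℝ → ℝ → ℝ) : Prop where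
  su : SmoothTwo u
  sθ : SmoothTwo θ
  sq : SmoothTwo q
  bc : ∀ t : ℝ, 0 < t → u 0 t = 0 ∧ u L t = 0 ∧ θ 0 t = 0 ∧ θ L t = 0
  weak : ∀ t : ℝ, 0 < t → ∀ φ : ℝ → ℝ, ContDiff ℝ 1 φ → φ 0 = 0 → φ L = 0 →
    ∫ x in (0 : ℝ)..L, (m x * pdt (pdt u) x t * φ x
      + (p x * pdx u x t + 2 * δ x * pdt (pdx u) x t) * deriv φ x + η * pdx θ x t * φ x) = 0
  e2 : ∀ x ∈ Ioo (0 : ℝ) L, ∀ t : ℝ, 0 < t → pdt θ x t + κ * pdx q x t + η * pdt (pdx u) x t = 0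
  e3 : ∀ x ∈ Ioo (0 : ℝ) L, ∀ t : ℝ, 0 < t → τ * pdt q x t + β * q x t + κ * pdx θ x t = 0

lemma weakSol_of_sol {L η β κ τ : ℝ} (hL : 0 < L) {m δ p : ℝ → ℝ}
    (hδLip : ∃ K, LipschitzOnWith K δ (Icc 0 L))
    (hpLip : ∃ K, LipschitzOnWith K p (Icc 0 L)) {u θ q : ℝ → ℝ → ℝ}
    (h : IsSmoothSol L η β κ τ m δ p u θ q) (hb : BCD L u θ) :
    WeakSol L η β κ τ m δ p u θ q := by
  obtain ⟨hu, hθ, hq, he⟩ := h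
  have su : SmoothTwo u := hu
  refine ⟨hu, hθ, hq, fun t ht => hb t ht.le, ?_, fun x hx t ht => (he x hx t ht).2.1,
    fun x hx t ht => (he x hx t ht).2.2⟩
  intro t ht φ hφ h0 h1
  obtain ⟨K, hK⟩ := hδLip
  obtain ⟨K', hK'⟩ := hpLip
  rw [← uIcc_of_le hL.le] at hK hK'
  have aδ := hK.absolutelyContinuousOnInterval
  have ap := hK'.absolutelyContinuousOnInterval
  have a1 := ((su.pdx.smooth_x t).contDiffOn (s := uIcc 0 L)).absolutelyContinuousOnInterval
  have a2 := ((su.pdx.pdt.smooth_x t).contDiffOn (s := uIcc 0 L)).absolutelyContinuousOnInterval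
  have aφ := (hφ.contDiffOn (s := uIcc 0 L)).absolutelyContinuousOnInterval
  have aF : AbsolutelyContinuousOnInterval
      (fun y => p y * pdx u y t + 2 * δ y * pdt (pdx u) y t) 0 L :=
    (ap.fun_mul a1).fun_add ((aδ.const_mul 2).fun_mul a2)
  have key := aφ.integral_deriv_mul_eq_sub aF
  rw [h0, h1] at key
  simp only [zero_mul, sub_zero] at key
  refine Eq.trans ?_ key
  apply integral_congr_Ioo_of_le hL.le
  intro x hx
  have := (he x hx t ht).1
  simp only [pdx] at this ⊢
  linear_combination φ x * this

lemma contOn_fst {L : ℝ} {w : ℝ → ℝ} (hw : ContinuousOn w (Icc 0 L)) :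
    ContinuousOn (fun z : ℝ × ℝ => w z.1) (Icc 0 L ×ˢ univ) :=
  hw.comp continuous_fst.continuousOn fun _ hz => hz.1

lemma hasDerivAt_wsq {L : ℝ} (hL : 0 < L) {w : ℝ → ℝ} (hw : ContinuousOn w (Icc 0 L))
    {f : ℝ → ℝ → ℝ} (hf : SmoothTwo f) (t : ℝ) :
    HasDerivAt (fun s => ∫ x in (0 : ℝ)..L, w x * (f x s) ^ 2)
      (∫ x in (0 : ℝ)..L, w x * (2 * f x t * pdt f x t)) t := by
  refine hasDerivAt_int hL (G := fun x s => w x * (f x s) ^ 2)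
    (G' := fun x s => w x * (2 * f x s * pdt f x s)) ?_ ?_ ?_ t
  · intro t
    exact hw.mul ((hf.cont_x t).pow 2).continuousOn
  · exact (contOn_fst hw).mul ((continuous_const.mul hf.cont).mul hf.pdt.cont).continuousOn
  · intro x _ t
    have := ((hf.hasDerivAt_t x t).pow 2).const_mul (w x)
    exact this.congr_deriv (by simp)

lemma WeakSol.dt {L η β κ τ : ℝ} (hL : 0 < L) {m δ p : ℝ → ℝ}
    (hm : ContinuousOn m (Icc 0 L)) (hδ : ContinuousOn δ (Icc 0 L))
    (hp : ContinuousOn p (Icc 0 L)) {u θ q : ℝ → ℝ → ℝ}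
    (h : WeakSol L η β κ τ m δ p u θ q) :
    WeakSol L η β κ τ m δ p (pdt u) (pdt θ) (pdt q) := by
  have su := h.su
  have sθ := h.sθ
  have sq := h.sq
  have zero_deriv : ∀ g : ℝ → ℝ, ∀ g' t : ℝ, 0 < t → HasDerivAt g g' t →
      (∀ s, 0 < s → g s = 0) → g' = 0 := by
    intro g g' t ht hg hz
    refine hg.unique ((hasDerivAt_const t (0 : ℝ)).congr_of_eventuallyEq ?_)
    filter_upwards [Ioi_mem_nhds ht] with s hs using hz s hs
  refine ⟨su.pdt, sθ.pdt, sq.pdt, ?_, ?_, ?_, ?_⟩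
  · intro t ht
    exact ⟨zero_deriv _ _ t ht (su.hasDerivAt_t 0 t) fun s hs => (h.bc s hs).1,
      zero_deriv _ _ t ht (su.hasDerivAt_t L t) fun s hs => (h.bc s hs).2.1,
      zero_deriv _ _ t ht (sθ.hasDerivAt_t 0 t) fun s hs => (h.bc s hs).2.2.1,
      zero_deriv _ _ t ht (sθ.hasDerivAt_t L t) fun s hs => (h.bc s hs).2.2.2⟩
  · intro t ht φ hφ h0 h1
    rw [su.comm, sθ.comm]
    refine zero_deriv _ _ t ht ?_ (fun s hs => h.weak s hs φ hφ h0 h1)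
    have cφ : Continuous φ := hφ.continuous
    have cφ' : Continuous (deriv φ) := hφ.continuous_deriv le_rfl
    refine hasDerivAt_int hL (G := fun x t => m x * pdt (pdt u) x t * φ x
      + (p x * pdx u x t + 2 * δ x * pdt (pdx u) x t) * deriv φ x + η * pdx θ x t * φ x)
      (G' := fun x t => m x * pdt (pdt (pdt u)) x t * φ x
      + (p x * pdt (pdx u) x t + 2 * δ x * pdt (pdt (pdx u)) x t) * deriv φ x
      + η * pdt (pdx θ) x t * φ x) ?_ ?_ ?_ t
    · intro t
      have c1 := su.pdt.pdt.cont_x t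
      have c2 := su.pdx.cont_x t
      have c3 := su.pdx.pdt.cont_x t
      have c4 := sθ.pdx.cont_x t
      exact (((hm.mul c1.continuousOn).mul cφ.continuousOn).add
        (((hp.mul c2.continuousOn).add ((continuousOn_const.mul hδ).mul c3.continuousOn)).mul
          cφ'.continuousOn)).add ((continuous_const.mul c4).mul cφ).continuousOn
    · have c1 := su.pdt.pdt.pdt.cont
      have c2 := su.pdx.pdt.cont
      have c3 := su.pdx.pdt.pdt.cont
      have c4 := sθ.pdx.pdt.cont
      have d1 := cφ.comp (continuous_fst (X := ℝ) (Y := ℝ))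
      have d2 := cφ'.comp (continuous_fst (X := ℝ) (Y := ℝ))
      exact ((((contOn_fst hm).mul c1.continuousOn).mul d1.continuousOn).add
        ((((contOn_fst hp).mul c2.continuousOn).add
          ((continuousOn_const.mul (contOn_fst hδ)).mul c3.continuousOn)).mul
          d2.continuousOn)).add ((continuous_const.mul c4).mul d1).continuousOn
    · intro x _ t
      exact ((((su.pdt.pdt.hasDerivAt_t x t).const_mul (m x)).mul_const (φ x)).add
        ((((su.pdx.hasDerivAt_t x t).const_mul (p x)).add
          ((su.pdx.pdt.hasDerivAt_t x t).const_mul (2 * δ x))).mul_const (deriv φ x))).add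
        (((sθ.pdx.hasDerivAt_t x t).const_mul η).mul_const (φ x))
  · intro x hx t ht
    rw [su.comm, sq.comm]
    exact zero_deriv _ _ t ht (((sθ.pdt.hasDerivAt_t x t).add
      ((sq.pdx.hasDerivAt_t x t).const_mul κ)).add ((su.pdx.pdt.hasDerivAt_t x t).const_mul η))
      (fun s hs => h.e2 x hx s hs)
  · intro x hx t ht
    rw [sθ.comm]
    exact zero_deriv _ _ t ht ((((sq.pdt.hasDerivAt_t x t).const_mul τ).add
      ((sq.hasDerivAt_t x t).const_mul β)).add ((sθ.pdx.hasDerivAt_t x t).const_mul κ))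
      (fun s hs => h.e3 x hx s hs)

lemma energy_one_dim {L η β κ τ : ℝ} (hL : 0 < L) {m δ p : ℝ → ℝ}
    (hm : ContinuousOn m (Icc 0 L)) (hδ : ContinuousOn δ (Icc 0 L))
    (hp : ContinuousOn p (Icc 0 L)) {a b v c h hx ht q qx qt : ℝ → ℝ}
    (ca : Continuous a) (cb : Continuous b) (cc : Continuous c) (chx : Continuous hx)
    (cht : Continuous ht) (cqx : Continuous qx) (cqt : Continuous qt)
    (dv : ∀ x, HasDerivAt v (b x) x) (dh : ∀ x, HasDerivAt h (hx x) x)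
    (dq : ∀ x, HasDerivAt q (qx x) x)
    (h0 : h 0 = 0) (hl : h L = 0)
    (hw : ∫ x in (0 : ℝ)..L, (m x * c x * v x + (p x * a x + 2 * δ x * b x) * b x
      + η * hx x * v x) = 0)
    (e2 : ∀ x ∈ Ioo (0 : ℝ) L, ht x + κ * qx x + η * b x = 0)
    (e3 : ∀ x ∈ Ioo (0 : ℝ) L, τ * qt x + β * q x + κ * hx x = 0) :
    (1 / 2) * ((∫ x in (0 : ℝ)..L, p x * (2 * a x * b x))
      + (∫ x in (0 : ℝ)..L, m x * (2 * v x * c x))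
      + (∫ x in (0 : ℝ)..L, 1 * (2 * h x * ht x))
      + τ * ∫ x in (0 : ℝ)..L, 1 * (2 * q x * qt x))
    = -(2 * ∫ x in (0 : ℝ)..L, δ x * b x ^ 2) - β * ∫ x in (0 : ℝ)..L, q x ^ 2 := by
  have cv : Continuous v := continuous_iff_continuousAt.2 fun x => (dv x).continuousAt
  have ch : Continuous h := continuous_iff_continuousAt.2 fun x => (dh x).continuousAt
  have cq : Continuous q := continuous_iff_continuousAt.2 fun x => (dq x).continuousAt
  have z1 : ∫ x in (0 : ℝ)..L, (κ * (qx x * h x + q x * hx x) + η * (hx x * v x + h x * b x)) = 0 := by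
    rw [integral_eq_sub_of_hasDerivAt (f := fun x => κ * (q x * h x) + η * (h x * v x))]
    · simp [h0, hl]
    · intro x _
      exact (((dq x).mul (dh x)).const_mul κ).add (((dh x).mul (dv x)).const_mul η)
    · exact Continuous.intervalIntegrable (by fun_prop) _ _
  have z2 : (∫ x in (0 : ℝ)..L, ((m x * c x * v x + (p x * a x + 2 * δ x * b x) * b x
      + η * hx x * v x) - (κ * (qx x * h x + q x * hx x) + η * (hx x * v x + h x * b x)))) = 0 := by
    rw [intervalIntegral.integral_sub, hw, z1, sub_zero]
    · exact ContinuousOn.intervalIntegrable_of_Icc hL.le (by fun_prop)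
    · exact ContinuousOn.intervalIntegrable_of_Icc hL.le (by fun_prop)
  have z3 : (∫ x in (0 : ℝ)..L, ((1 / 2) * (p x * (2 * a x * b x) + m x * (2 * v x * c x)
      + 1 * (2 * h x * ht x) + τ * (1 * (2 * q x * qt x))) + 2 * (δ x * b x ^ 2)
      + β * q x ^ 2)) = 0 := by
    refine Eq.trans ?_ z2
    apply integral_congr_Ioo_of_le hL.le
    intro x hx'
    have := e2 x hx'
    have := e3 x hx'
    simp only
    linear_combination h x * e2 x hx' + q x * e3 x hx'
  rw [intervalIntegral.integral_add, intervalIntegral.integral_add, intervalIntegral.integral_const_mul,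
    intervalIntegral.integral_const_mul, intervalIntegral.integral_const_mul, intervalIntegral.integral_add,
    intervalIntegral.integral_add, intervalIntegral.integral_add, intervalIntegral.integral_const_mul τ] at z3
  · linarith
  all_goals exact ContinuousOn.intervalIntegrable_of_Icc hL.le (by fun_prop)

lemma elliptic_one_dim {L η P M Δ ε k1 k2 k3 : ℝ} (hL : 0 < L) (hP : 0 < P) (hε : 0 < ε)
    (hεP : 32 * ε * L ^ 2 = P) (hk1 : 4 * Δ ^ 2 ≤ P * k1) (hk2 : M ^ 2 ≤ 4 * ε * k2)
    (hk3 : η ^ 2 ≤ 4 * ε * k3) {m δ p : ℝ → ℝ}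
    (hm : ContinuousOn m (Icc 0 L)) (hδ : ContinuousOn δ (Icc 0 L))
    (hp : ContinuousOn p (Icc 0 L))
    (bm : ∀ x ∈ Icc 0 L, 0 ≤ m x ∧ m x ≤ M) (bδ : ∀ x ∈ Icc 0 L, 0 ≤ δ x ∧ δ x ≤ Δ)
    (bp : ∀ x ∈ Icc 0 L, P ≤ p x) {w a b c g : ℝ → ℝ}
    (ca : Continuous a) (cb : Continuous b) (cc : Continuous c) (cg : Continuous g)
    (dw : ∀ x, HasDerivAt w (a x) x) (w0 : w 0 = 0)
    (hw : ∫ x in (0 : ℝ)..L, (m x * c x * w x + (p x * a x + 2 * δ x * b x) * a x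
      + η * g x * w x) = 0) :
    ∫ x in (0 : ℝ)..L, p x * a x ^ 2 ≤ 2 * (k1 * (∫ x in (0 : ℝ)..L, b x ^ 2)
      + k2 * (∫ x in (0 : ℝ)..L, c x ^ 2) + k3 * ∫ x in (0 : ℝ)..L, g x ^ 2) := by
  have cw : Continuous w := continuous_iff_continuousAt.2 fun x => (dw x).continuousAt
  have hpo := poincare hL dw ca w0
  have m1 : ∫ x in (0 : ℝ)..L, P * a x ^ 2 ≤ ∫ x in (0 : ℝ)..L, p x * a x ^ 2 := by
    apply integral_mono_on hL.le
    · exact ContinuousOn.intervalIntegrable_of_Icc hL.le (by fun_prop)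
    · exact ContinuousOn.intervalIntegrable_of_Icc hL.le (by fun_prop)
    · intro x hx
      exact mul_le_mul_of_nonneg_right (bp x hx) (sq_nonneg _)
  rw [intervalIntegral.integral_const_mul] at m1
  have m2 : ∫ x in (0 : ℝ)..L, (p x * a x ^ 2 - P / 4 * a x ^ 2 - k1 * b x ^ 2
      - 2 * ε * w x ^ 2 - k2 * c x ^ 2 - k3 * g x ^ 2) ≤
      ∫ x in (0 : ℝ)..L, (m x * c x * w x + (p x * a x + 2 * δ x * b x) * a x
      + η * g x * w x) := by
    apply integral_mono_on hL.le
    · exact ContinuousOn.intervalIntegrable_of_Icc hL.le (by fun_prop)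
    · exact ContinuousOn.intervalIntegrable_of_Icc hL.le (by fun_prop)
    · intro x hx
      obtain ⟨hm0, hm1⟩ := bm x hx
      obtain ⟨hδ0, hδ1⟩ := bδ x hx
      have hmm : m x ^ 2 ≤ 4 * ε * k2 := le_trans (by gcongr) hk2
      have hdd : 4 * δ x ^ 2 ≤ P * k1 := le_trans (by gcongr) hk1
      have i1 : 0 ≤ P / 4 * a x ^ 2 + 2 * δ x * b x * a x + k1 * b x ^ 2 := by
        refine nonneg_of_mul_nonneg_right (a := P) ?_ hP
        nlinarith [sq_nonneg (P * a x / 2 + 2 * δ x * b x),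
          mul_le_mul_of_nonneg_right hdd (sq_nonneg (b x))]
      have i2 : 0 ≤ ε * w x ^ 2 + m x * c x * w x + k2 * c x ^ 2 := by
        refine nonneg_of_mul_nonneg_right (a := 4 * ε) ?_ (by linarith)
        nlinarith [sq_nonneg (2 * ε * w x + m x * c x),
          mul_le_mul_of_nonneg_right hmm (sq_nonneg (c x))]
      have i3 : 0 ≤ ε * w x ^ 2 + η * g x * w x + k3 * g x ^ 2 := by
        refine nonneg_of_mul_nonneg_right (a := 4 * ε) ?_ (by linarith)
        nlinarith [sq_nonneg (2 * ε * w x + η * g x),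
          mul_le_mul_of_nonneg_right hk3 (sq_nonneg (g x))]
      linarith
  rw [hw, intervalIntegral.integral_sub, intervalIntegral.integral_sub, intervalIntegral.integral_sub, intervalIntegral.integral_sub, intervalIntegral.integral_sub,
    intervalIntegral.integral_const_mul, intervalIntegral.integral_const_mul,
    intervalIntegral.integral_const_mul, intervalIntegral.integral_const_mul,
    intervalIntegral.integral_const_mul] at m2
  · have : 2 * ε * ∫ x in (0 : ℝ)..L, w x ^ 2 ≤ P / 4 * ∫ x in (0 : ℝ)..L, a x ^ 2 := by
      calc 2 * ε * ∫ x in (0 : ℝ)..L, w x ^ 2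
          ≤ 2 * ε * (4 * L ^ 2 * ∫ x in (0 : ℝ)..L, a x ^ 2) := by gcongr
        _ = P / 4 * ∫ x in (0 : ℝ)..L, a x ^ 2 := by rw [← hεP]; ring
    linarith
  all_goals exact ContinuousOn.intervalIntegrable_of_Icc hL.le (by fun_prop)

/-- The dissipation functional. -/
def dissip (L β : ℝ) (δ : ℝ → ℝ) (u q : ℝ → ℝ → ℝ) (t : ℝ) : ℝ :=
  2 * (∫ x in (0 : ℝ)..L, δ x * (pdt (pdx u) x t) ^ 2) + β * ∫ x in (0 : ℝ)..L, (q x t) ^ 2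

lemma energy1_hasDerivAt' {L τ : ℝ} (hL : 0 < L) {m p : ℝ → ℝ}
    (hm : ContinuousOn m (Icc 0 L)) (hp : ContinuousOn p (Icc 0 L)) {u θ q : ℝ → ℝ → ℝ}
    (su : SmoothTwo u) (sθ : SmoothTwo θ) (sq : SmoothTwo q) (t : ℝ) :
    HasDerivAt (energy1 L τ m p u θ q)
     ((1 / 2) * ((∫ x in (0 : ℝ)..L, p x * (2 * pdx u x t * pdt (pdx u) x t))
      + (∫ x in (0 : ℝ)..L, m x * (2 * pdt u x t * pdt (pdt u) x t))
      + (∫ x in (0 : ℝ)..L, 1 * (2 * θ x t * pdt θ x t))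
      + τ * ∫ x in (0 : ℝ)..L, 1 * (2 * q x t * pdt q x t))) t := by
  have h1 := hasDerivAt_wsq hL hp su.pdx t
  have h2 := hasDerivAt_wsq hL hm su.pdt t
  have h3 := hasDerivAt_wsq hL (w := fun _ => 1) continuousOn_const sθ t
  have h4 := hasDerivAt_wsq hL (w := fun _ => 1) continuousOn_const sq t
  have h5 := (((h1.add h2).add h3).add (h4.const_mul τ)).const_mul (1 / 2)
  refine h5.congr_of_eventuallyEq (Eventually.of_forall fun s => ?_)
  simp [energy1]

lemma WeakSol.energy_deriv {L η β κ τ : ℝ} (hL : 0 < L) {m δ p : ℝ → ℝ}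
    (hm : ContinuousOn m (Icc 0 L)) (hδ : ContinuousOn δ (Icc 0 L))
    (hp : ContinuousOn p (Icc 0 L)) {u θ q : ℝ → ℝ → ℝ}
    (h : WeakSol L η β κ τ m δ p u θ q) {t : ℝ} (ht : 0 < t) :
    HasDerivAt (energy1 L τ m p u θ q) (-dissip L β δ u q t) t := by
  have su := h.su
  have sθ := h.sθ
  have sq := h.sq
  refine (energy1_hasDerivAt' hL hm hp su sθ sq t).congr_deriv ?_
  have dv : ∀ x, HasDerivAt (fun y => pdt u y t) (pdt (pdx u) x t) x := by
    intro x; rw [← su.comm]; exact su.pdt.hasDerivAt_x x t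
  have hb := (h.dt hL hm hδ hp).bc t ht
  have hw := h.weak t ht (fun y => pdt u y t) (su.pdt.smooth_x t) hb.1 hb.2.1
  simp only [(dv _).deriv] at hw
  have := energy_one_dim (κ := κ) (β := β) (τ := τ) hL hm hδ hp (su.pdx.cont_x t)
    (su.pdx.pdt.cont_x t) (su.pdt.pdt.cont_x t)
    (sθ.pdx.cont_x t) (sθ.pdt.cont_x t) (sq.pdx.cont_x t) (sq.pdt.cont_x t) dv
    (fun x => sθ.hasDerivAt_x x t) (fun x => sq.hasDerivAt_x x t) (h.bc t ht).2.2.1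
    (h.bc t ht).2.2.2 hw (fun x hx => h.e2 x hx t ht) (fun x hx => h.e3 x hx t ht)
  rw [this, dissip]
  ring

lemma int_sq_nonneg {L : ℝ} (hL : 0 < L) (f : ℝ → ℝ) : 0 ≤ ∫ x in (0 : ℝ)..L, f x ^ 2 :=
  intervalIntegral.integral_nonneg hL.le fun _ _ => sq_nonneg _

lemma int_wsq_nonneg {L : ℝ} (hL : 0 < L) {w : ℝ → ℝ} (hw : ∀ x ∈ Icc 0 L, 0 < w x)
    (f : ℝ → ℝ) : 0 ≤ ∫ x in (0 : ℝ)..L, w x * f x ^ 2 :=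
  intervalIntegral.integral_nonneg hL.le fun x hx => mul_nonneg (hw x hx).le (sq_nonneg _)

set_option maxHeartbeats 1000000 in
/-- The energy is controlled by the total dissipation. -/
lemma energy_le_dissip {L η β κ τ : ℝ} (hL : 0 < L) (hβ : 0 < β) (hκ : 0 < κ) (hτ : 0 < τ)
    {m δ p : ℝ → ℝ}
    (hm : ContinuousOn m (Icc 0 L)) (hδ : ContinuousOn δ (Icc 0 L))
    (hp : ContinuousOn p (Icc 0 L))
    (hmpos : ∀ x ∈ Icc (0 : ℝ) L, 0 < m x)
    (hδpos : ∀ x ∈ Icc (0 : ℝ) L, 0 < δ x)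
    (hppos : ∀ x ∈ Icc (0 : ℝ) L, 0 < p x) :
    ∃ K > (0 : ℝ), ∀ u θ q : ℝ → ℝ → ℝ, WeakSol L η β κ τ m δ p u θ q → ∀ t : ℝ, 0 < t →
      energy1 L τ m p u θ q t ≤
        K * (dissip L β δ u q t + dissip L β δ (pdt u) (pdt q) t) := by
  have hne : (Icc (0 : ℝ) L).Nonempty := ⟨0, le_rfl, hL.le⟩
  obtain ⟨xM, hxM, hM⟩ := isCompact_Icc.exists_isMaxOn hne hm
  obtain ⟨xΔ, hxΔ, hΔ⟩ := isCompact_Icc.exists_isMaxOn hne hδ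
  obtain ⟨xd, hxd, hd⟩ := isCompact_Icc.exists_isMinOn hne hδ
  obtain ⟨xP, hxP, hP⟩ := isCompact_Icc.exists_isMinOn hne hp
  have M0 := hmpos xM hxM
  have d0 := hδpos xd hxd
  have P0 := hppos xP hxP
  generalize hMe : m xM = M at *
  generalize hΔe : δ xΔ = Δ at *
  generalize hde : δ xd = d at *
  generalize hPe : p xP = P at *
  have bM : ∀ x ∈ Icc 0 L, m x ≤ M := fun x hx => hMe ▸ hM hx
  have bΔ : ∀ x ∈ Icc 0 L, δ x ≤ Δ := fun x hx => hΔe ▸ hΔ hx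
  have bd : ∀ x ∈ Icc 0 L, d ≤ δ x := fun x hx => hde ▸ hd hx
  have bP : ∀ x ∈ Icc 0 L, P ≤ p x := fun x hx => hPe ▸ hP hx
  obtain ⟨ε, hε, hεP⟩ : ∃ ε > 0, 32 * ε * L ^ 2 = P :=
    ⟨P / (32 * L ^ 2), by positivity, by field_simp⟩
  obtain ⟨k1, k10, hk1⟩ : ∃ k1 ≥ 0, 4 * Δ ^ 2 ≤ P * k1 :=
    ⟨4 * Δ ^ 2 / P, by positivity, by field_simp; exact le_rfl⟩
  obtain ⟨k2, k20, hk2⟩ : ∃ k2 ≥ 0, M ^ 2 ≤ 4 * ε * k2 :=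
    ⟨M ^ 2 / (4 * ε), by positivity, by field_simp; exact le_rfl⟩
  obtain ⟨k3, k30, hk3⟩ : ∃ k3 ≥ 0, η ^ 2 ≤ 4 * ε * k3 :=
    ⟨η ^ 2 / (4 * ε), by positivity, by field_simp; exact le_rfl⟩
  obtain ⟨k4, k40, hk4⟩ : ∃ k4 ≥ 0, k4 * κ ^ 2 = (2 * k3 + 4 * L ^ 2) * 2 :=
    ⟨(2 * k3 + 4 * L ^ 2) * 2 / κ ^ 2, by positivity, by field_simp⟩
  obtain ⟨c, c0, hc1, hc2⟩ : ∃ c > 0, c ≤ 2 * d ∧ c ≤ β :=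
    ⟨min (2 * d) β, by positivity, min_le_left _ _, min_le_right _ _⟩
  obtain ⟨K0, hK0⟩ : ∃ K0, K0 = (2 * k1 + 4 * M * L ^ 2) + 8 * L ^ 2 * k2
    + k4 * (τ ^ 2 + β ^ 2) + τ := ⟨_, rfl⟩
  have K00 : 0 < K0 := by rw [hK0]; positivity
  refine ⟨K0 / (2 * c), by positivity, ?_⟩
  intro u θ q h t ht
  have su := h.su
  have sθ := h.sθ
  have sq := h.sq
  have hb := h.bc t ht
  have hdt := h.dt hL hm hδ hp
  have hb1 := hdt.bc t ht
  have hb2 := (hdt.dt hL hm hδ hp).bc t ht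
  have dv : ∀ x, HasDerivAt (fun y => pdt u y t) (pdt (pdx u) x t) x := by
    intro x; rw [← su.comm]; exact su.pdt.hasDerivAt_x x t
  have da : ∀ x, HasDerivAt (fun y => pdt (pdt u) y t) (pdt (pdt (pdx u)) x t) x := by
    intro x; rw [← su.comm, ← su.pdt.comm]; exact su.pdt.pdt.hasDerivAt_x x t
  have hw := h.weak t ht (fun y => u y t) (su.smooth_x t) hb.1 hb.2.1
  simp only [(su.hasDerivAt_x _ t).deriv] at hw
  have ell := elliptic_one_dim hL P0 hε hεP hk1 hk2 hk3 hm hδ hp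
    (fun x hx => ⟨(hmpos x hx).le, bM x hx⟩) (fun x hx => ⟨(hδpos x hx).le, bΔ x hx⟩) bP
    (su.pdx.cont_x t) (su.pdx.pdt.cont_x t) (su.pdt.pdt.cont_x t) (sθ.pdx.cont_x t)
    (fun x => su.hasDerivAt_x x t) hb.1 hw
  have po1 := poincare hL dv (su.pdx.pdt.cont_x t) hb1.1
  have po2 := poincare hL da (su.pdx.pdt.pdt.cont_x t) hb2.1
  have po3 := poincare hL (fun x => sθ.hasDerivAt_x x t) (sθ.pdx.cont_x t) hb.2.2.1
  -- control of the temperature gradient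
  have hT : κ ^ 2 * ∫ x in (0 : ℝ)..L, pdx θ x t ^ 2 ≤
      2 * (τ ^ 2 * (∫ x in (0 : ℝ)..L, pdt q x t ^ 2) + β ^ 2 * ∫ x in (0 : ℝ)..L, q x t ^ 2) := by
    have c1 := (sq.pdt.cont_x t).pow 2
    have c2 := (sq.cont_x t).pow 2
    rw [← intervalIntegral.integral_const_mul, ← intervalIntegral.integral_const_mul,
      ← intervalIntegral.integral_const_mul, ← intervalIntegral.integral_add,
      ← intervalIntegral.integral_const_mul]
    · refine integral_mono_on_of_le_Ioo hL.le ?_ ?_ ?_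
      · exact (((sθ.pdx.cont_x t).pow 2).const_mul _).intervalIntegrable _ _
      · exact (((c1.const_mul _).add (c2.const_mul _)).const_mul _).intervalIntegrable _ _
      · intro x hx
        have e : κ * pdx θ x t = -(τ * pdt q x t + β * q x t) := by
          linear_combination h.e3 x hx t ht
        rw [← mul_pow, e]
        linarith [sq_nonneg (τ * pdt q x t - β * q x t)]
    · exact (c1.const_mul _).intervalIntegrable _ _
    · exact (c2.const_mul _).intervalIntegrable _ _
  have hmv : ∫ x in (0 : ℝ)..L, m x * pdt u x t ^ 2 ≤ M * ∫ x in (0 : ℝ)..L, pdt u x t ^ 2 := by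
    have c1 := (su.pdt.cont_x t).pow 2
    rw [← intervalIntegral.integral_const_mul]
    refine integral_mono_on hL.le ?_ ?_ ?_
    · exact (hm.mul c1.continuousOn).intervalIntegrable_of_Icc hL.le
    · exact (c1.const_mul _).intervalIntegrable _ _
    · intro x hx
      exact mul_le_mul_of_nonneg_right (bM x hx) (sq_nonneg _)
  have hdel : ∀ f : ℝ → ℝ, Continuous f → d * ∫ x in (0 : ℝ)..L, f x ^ 2 ≤
      ∫ x in (0 : ℝ)..L, δ x * f x ^ 2 := by
    intro f hf
    have c1 := hf.pow 2
    rw [← intervalIntegral.integral_const_mul]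
    refine integral_mono_on hL.le ?_ ?_ ?_
    · exact (c1.const_mul _).intervalIntegrable _ _
    · exact (hδ.mul c1.continuousOn).intervalIntegrable_of_Icc hL.le
    · intro x hx
      exact mul_le_mul_of_nonneg_right (bd x hx) (sq_nonneg _)
  have hd1 := hdel _ (su.pdx.pdt.cont_x t)
  have hd2 := hdel _ (su.pdx.pdt.pdt.cont_x t)
  have A0 := int_sq_nonneg hL (fun x => pdt (pdx u) x t)
  have B0 := int_sq_nonneg hL (fun x => pdt (pdt (pdx u)) x t)
  have Q0 := int_sq_nonneg hL (fun x => q x t)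
  have R0 := int_sq_nonneg hL (fun x => pdt q x t)
  simp only [energy1, dissip, su.comm]
  generalize (∫ x in (0 : ℝ)..L, δ x * pdt (pdx u) x t ^ 2) = DA at *
  generalize (∫ x in (0 : ℝ)..L, δ x * pdt (pdt (pdx u)) x t ^ 2) = DB at *
  generalize (∫ x in (0 : ℝ)..L, pdt (pdx u) x t ^ 2) = A at *
  generalize (∫ x in (0 : ℝ)..L, pdt (pdt (pdx u)) x t ^ 2) = B at *
  generalize (∫ x in (0 : ℝ)..L, q x t ^ 2) = Q at *
  generalize (∫ x in (0 : ℝ)..L, pdt q x t ^ 2) = R at *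
  generalize (∫ x in (0 : ℝ)..L, pdx θ x t ^ 2) = T at *
  generalize (∫ x in (0 : ℝ)..L, θ x t ^ 2) = H at *
  generalize (∫ x in (0 : ℝ)..L, p x * pdx u x t ^ 2) = X at *
  generalize (∫ x in (0 : ℝ)..L, m x * pdt u x t ^ 2) = Y at *
  generalize (∫ x in (0 : ℝ)..L, pdt u x t ^ 2) = V at *
  generalize (∫ x in (0 : ℝ)..L, pdt (pdt u) x t ^ 2) = W at *
  clear hdel hw
  have s1 : k2 * W ≤ k2 * (4 * L ^ 2 * B) := by gcongr
  have s2 : M * V ≤ M * (4 * L ^ 2 * A) := by gcongr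
  have s3 : (2 * k3 + 4 * L ^ 2) * T ≤ k4 * (τ ^ 2 * R + β ^ 2 * Q) := by
    have : k4 * (κ ^ 2 * T) ≤ k4 * (2 * (τ ^ 2 * R + β ^ 2 * Q)) := by gcongr
    have e : k4 * (κ ^ 2 * T) = (2 * k3 + 4 * L ^ 2) * 2 * T := by rw [← hk4]; ring
    linarith
  have s4 : X + Y + H + τ * Q ≤ (2 * k1 + 4 * M * L ^ 2) * A + 8 * L ^ 2 * k2 * B
      + k4 * (τ ^ 2 * R + β ^ 2 * Q) + τ * Q := by linarith
  have s5 : (2 * k1 + 4 * M * L ^ 2) * A + 8 * L ^ 2 * k2 * B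
      + k4 * (τ ^ 2 * R + β ^ 2 * Q) + τ * Q ≤ K0 * (A + B + Q + R) := by
    have n1 : 0 ≤ 2 * k1 + 4 * M * L ^ 2 := by positivity
    have n2 : 0 ≤ 8 * L ^ 2 * k2 := by positivity
    have n3 : 0 ≤ k4 * τ ^ 2 := by positivity
    have n4 : 0 ≤ k4 * β ^ 2 := by positivity
    have l1 : (2 * k1 + 4 * M * L ^ 2) * A ≤ K0 * A :=
      mul_le_mul_of_nonneg_right (by rw [hK0]; linarith) A0
    have l2 : (8 * L ^ 2 * k2) * B ≤ K0 * B :=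
      mul_le_mul_of_nonneg_right (by rw [hK0]; linarith) B0
    have l3 : (k4 * β ^ 2 + τ) * Q ≤ K0 * Q :=
      mul_le_mul_of_nonneg_right (by rw [hK0]; linarith) Q0
    have l4 : (k4 * τ ^ 2) * R ≤ K0 * R :=
      mul_le_mul_of_nonneg_right (by rw [hK0]; linarith) R0
    linarith
  have s6 : c * (A + B + Q + R) ≤ 2 * DA + β * Q + (2 * DB + β * R) := by
    have l1 := mul_le_mul_of_nonneg_right hc1 A0
    have l2 := mul_le_mul_of_nonneg_right hc1 B0
    have l3 := mul_le_mul_of_nonneg_right hc2 Q0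
    have l4 := mul_le_mul_of_nonneg_right hc2 R0
    linarith
  calc 1 / 2 * (X + Y + H + τ * Q) ≤ 1 / 2 * (K0 * (A + B + Q + R)) := by linarith
    _ = K0 / (2 * c) * (c * (A + B + Q + R)) := by field_simp
    _ ≤ _ := by gcongr

/-- Polynomial decay of the first-order energy. -/
theorem polynomial_decay_first_energy
    (L η β κ τ : ℝ) (hL : 0 < L) (hη : 0 < η) (hβ : 0 < β) (hκ : 0 < κ) (hτ : 0 < τ)
    (m δ p : ℝ → ℝ)
    (hmLip : ∃ K, LipschitzOnWith K m (Icc 0 L))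
    (hδLip : ∃ K, LipschitzOnWith K δ (Icc 0 L))
    (hpLip : ∃ K, LipschitzOnWith K p (Icc 0 L))
    (hmpos : ∀ x ∈ Icc (0 : ℝ) L, 0 < m x)
    (hδpos : ∀ x ∈ Icc (0 : ℝ) L, 0 < δ x)
    (hppos : ∀ x ∈ Icc (0 : ℝ) L, 0 < p x)
    :
    ∃ C > (0 : ℝ),
      ∀ u θ q : ℝ → ℝ → ℝ,
        IsSmoothSol L η β κ τ m δ p u θ q → BCD L u θ →
          ∀ t : ℝ, 0 < t →
            energy1 L τ m p u θ q t
              ≤ C * (energy1 L τ m p u θ q 0 + energy2 L τ m p u θ q 0) / t := by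
  have hm : ContinuousOn m (Icc 0 L) := hmLip.choose_spec.continuousOn
  have hδ : ContinuousOn δ (Icc 0 L) := hδLip.choose_spec.continuousOn
  have hp : ContinuousOn p (Icc 0 L) := hpLip.choose_spec.continuousOn
  obtain ⟨K, K0, hK⟩ := energy_le_dissip (η := η) hL hβ hκ hτ hm hδ hp hmpos hδpos hppos
  refine ⟨K, K0, ?_⟩
  intro u θ q hs hb t ht
  have h := weakSol_of_sol hL hδLip hpLip hs hb
  have h' := h.dt hL hm hδ hp
  have hE2 : energy2 L τ m p u θ q = energy1 L τ m p (pdt u) (pdt θ) (pdt q) := by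
    funext s
    simp only [energy1, energy2, h.su.comm]
  rw [hE2]
  set E := energy1 L τ m p u θ q with hE
  set E' := energy1 L τ m p (pdt u) (pdt θ) (pdt q) with hE'
  have cE : Continuous E := continuous_iff_continuousAt.2 fun s =>
    (energy1_hasDerivAt' hL hm hp h.su h.sθ h.sq s).continuousAt
  have cE' : Continuous E' := continuous_iff_continuousAt.2 fun s =>
    (energy1_hasDerivAt' hL hm hp h'.su h'.sθ h'.sq s).continuousAt
  have hder : ∀ s, 0 < s → HasDerivAt (fun r => r * E r + K * (E r + E' r))
      (1 * E s + s * (-dissip L β δ u q s)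
        + K * (-dissip L β δ u q s + -dissip L β δ (pdt u) (pdt q) s)) s := by
    intro s hs
    have d1 := h.energy_deriv hL hm hδ hp hs
    have d2 := h'.energy_deriv hL hm hδ hp hs
    exact ((hasDerivAt_id s).mul d1).add ((d1.add d2).const_mul K)
  have hanti : AntitoneOn (fun r => r * E r + K * (E r + E' r)) (Ici 0) := by
    apply antitoneOn_of_deriv_nonpos (convex_Ici 0)
    · exact Continuous.continuousOn (by fun_prop)
    · intro s hs
      rw [interior_Ici] at hs
      exact (hder s hs).differentiableAt.differentiableWithinAt
    · intro s hs
      rw [interior_Ici] at hs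
      rw [(hder s hs).deriv]
      have k := hK u θ q h s hs
      have dn : 0 ≤ dissip L β δ u q s := by
        have a := int_wsq_nonneg hL hδpos (fun x => pdt (pdx u) x s)
        have b := int_sq_nonneg hL (fun x => q x s)
        simp only [dissip]
        positivity
      have := mul_nonneg (le_of_lt hs) dn
      linarith
  have hfin := hanti (mem_Ici.2 le_rfl) (mem_Ici.2 ht.le) ht.le
  simp only [zero_mul, zero_add] at hfin
  have nonneg : ∀ (u θ q : ℝ → ℝ → ℝ) s, 0 ≤ energy1 L τ m p u θ q s := by
    intro u θ q s
    have a := int_wsq_nonneg hL hppos (fun x => pdx u x s)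
    have b := int_wsq_nonneg hL hmpos (fun x => pdt u x s)
    have c := int_sq_nonneg hL (fun x => θ x s)
    have d := int_sq_nonneg hL (fun x => q x s)
    simp only [energy1]
    positivity
  have n1 : 0 ≤ E t := nonneg u θ q t
  have n2 : 0 ≤ E' t := nonneg (pdt u) (pdt θ) (pdt q) t
  rw [le_div_iff₀ ht]
  have : 0 ≤ K * (E t + E' t) := by positivity
  linarith
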